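/- arXiv:2402.13156 — 2 statements merged into one kernel-verified Lean document; each statement's English description precedes it below -/
import Mathlib

section
/- In any principal–agent instance with n := |A| actions, the infimum of R(Π) over menus Π of deterministic contracts of size exactly n equals the infimum of R(Π) over menus of deterministic contracts of all finite sizes K ≥ 1. -/
open Finset

variable {A Ω : Type} [Fintype A] [Fintype Ω] [Nonempty A] [Nonempty Ω]

/-- Agent's expected utility `U^a(p,c,a)` of action `a` under contract `p` and costs `c`. -/
noncomputable def Uag (F : A → Ω → ℝ) (p : Ω → ℝ) (c : A → ℝ) (a : A) : ℝ :=
  (∑ ω, F a ω * p ω) - c a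

/-- Principal's expected utility when the agent plays action `a` under contract `p`. -/
noncomputable def prinAct (F : A → Ω → ℝ) (r p : Ω → ℝ) (a : A) : ℝ :=
  ∑ ω, F a ω * (r ω - p ω)

/-- Principal's expected utility `U^p(p,c)`: the agent plays a best response,
with ties among best responses broken in favor of the principal. -/
noncomputable def Uprin (F : A → Ω → ℝ) (r p : Ω → ℝ) (c : A → ℝ) : ℝ :=
  sSup { x | ∃ a : A, (∀ a' : A, Uag F p c a' ≤ Uag F p c a) ∧ x = prinAct F r p a }

/-- A deterministic contract: nonnegative payments. -/
def IsContract (p : Ω → ℝ) : Prop := ∀ ω, 0 ≤ p ω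

/-- `OPT(c)`: the supremum over contracts of the principal's expected utility against `c`. -/
noncomputable def OPT (F : A → Ω → ℝ) (r : Ω → ℝ) (c : A → ℝ) : ℝ :=
  sSup { x | ∃ p : Ω → ℝ, IsContract p ∧ x = Uprin F r p c }

/-- The regret `R(p)` of a deterministic contract `p`. -/
noncomputable def regret (F : A → Ω → ℝ) (r : Ω → ℝ) (C : Set (A → ℝ)) (p : Ω → ℝ) : ℝ :=
  sSup { x | ∃ c ∈ C, x = OPT F r c - Uprin F r p c }

/-- Uncertainty level `d(C)`: the L∞-diameter of the uncertainty set. -/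
noncomputable def uncLevel (C : Set (A → ℝ)) : ℝ :=
  sSup { x | ∃ c ∈ C, ∃ c' ∈ C, x = ‖c - c'‖ }

/-- The assumptions defining a principal–agent instance `(A, Ω, r, C, F)`. -/
structure IsPAInstance (F : A → Ω → ℝ) (r : Ω → ℝ) (C : Set (A → ℝ)) : Prop where
  r_mem : ∀ ω, r ω ∈ Set.Icc (0:ℝ) 1
  F_mem : ∀ a ω, F a ω ∈ Set.Icc (0:ℝ) 1
  F_sum : ∀ a, ∑ ω, F a ω = 1
  C_nonempty : C.Nonempty
  C_mem : ∀ c ∈ C, ∀ a, c a ∈ Set.Icc (0:ℝ) 1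
  zero_action : ∃ a : A, ∀ c ∈ C, c a = 0

/-- The agent's best-response utility under contract `p`. -/
noncomputable def agentBest (F : A → Ω → ℝ) (p : Ω → ℝ) (c : A → ℝ) : ℝ :=
  ⨆ a : A, Uag F p c a

/-- Principal's expected utility `U^p(Π,c)` under a menu of deterministic contracts:
the agent selects an element maximizing its own utility, breaking ties in favor of
the principal. -/
noncomputable def UprinMenu (F : A → Ω → ℝ) (r : Ω → ℝ) {K : ℕ} (m : Fin K → Ω → ℝ)
    (c : A → ℝ) : ℝ :=
  sSup { x | ∃ i : Fin K, (∀ j : Fin K, agentBest F (m j) c ≤ agentBest F (m i) c) ∧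
    x = Uprin F r (m i) c }

/-- The regret `R(Π)` of a menu of deterministic contracts. -/
noncomputable def regretMenu (F : A → Ω → ℝ) (r : Ω → ℝ) (C : Set (A → ℝ)) {K : ℕ}
    (m : Fin K → Ω → ℝ) : ℝ :=
  sSup { x | ∃ c ∈ C, x = OPT F r c - UprinMenu F r m c }

theorem uag_le_best {A Ω : Type} [Fintype A] [Fintype Ω]
    (F : A → Ω → ℝ) (p : Ω → ℝ) (c : A → ℝ) (a : A) : Uag F p c a ≤ agentBest F p c :=
  le_ciSup (Set.finite_range (fun a => Uag F p c a)).bddAbove a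

theorem prinAct_eq {A Ω : Type} [Fintype Ω]
    (F : A → Ω → ℝ) (r p : Ω → ℝ) (a : A) :
    prinAct F r p a = (∑ ω, F a ω * r ω) - ∑ ω, F a ω * p ω := by
  simp [prinAct, mul_sub, Finset.sum_sub_distrib]

theorem best_bdd {A Ω : Type} [Fintype A] [Fintype Ω]
    (F : A → Ω → ℝ) (r p : Ω → ℝ) (c : A → ℝ) :
    BddAbove { x | ∃ a : A, (∀ a' : A, Uag F p c a' ≤ Uag F p c a) ∧ x = prinAct F r p a } := by
  apply (Set.finite_range (fun a => prinAct F r p a)).bddAbove.mono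
  rintro x ⟨a, -, rfl⟩
  exact ⟨a, rfl⟩

theorem menu_eq {A Ω : Type} [Fintype A] [Fintype Ω] [Nonempty A]
    (F : A → Ω → ℝ) (r : Ω → ℝ) {K : ℕ} (hK : 0 < K) (m : Fin K → Ω → ℝ) (c : A → ℝ)
    (T : A → ℝ) (hT : ∀ a i, ∑ ω, F a ω * m i ω ≤ T a)
    (hT' : ∀ a, ∃ i, ∑ ω, F a ω * m i ω = T a) :
    UprinMenu F r m c = sSup { x | ∃ a : A, (∀ a', T a' - c a' ≤ T a - c a) ∧
      x = (∑ ω, F a ω * r ω) - T a } := by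
  have : Nonempty (Fin K) := ⟨⟨0, hK⟩⟩
  apply le_antisymm
  · apply csSup_le
    · obtain ⟨i, hi⟩ := Finite.exists_max (fun i => agentBest F (m i) c)
      exact ⟨_, i, hi, rfl⟩
    rintro x ⟨i, hi, rfl⟩
    apply csSup_le
    · obtain ⟨a, ha⟩ := Finite.exists_max (fun a => Uag F (m i) c a)
      exact ⟨_, a, ha, rfl⟩
    rintro x ⟨a, ha, rfl⟩
    have hb : agentBest F (m i) c ≤ Uag F (m i) c a := ciSup_le ha
    have key : ∀ a', T a' - c a' ≤ Uag F (m i) c a := by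
      intro a'
      obtain ⟨j, hj⟩ := hT' a'
      have h1 := uag_le_best F (m j) c a'
      have h2 := hi j
      have h3 : Uag F (m j) c a' = T a' - c a' := by rw [Uag, hj]
      linarith
    have h1 := key a
    have h2 := hT a i
    have h3 : ∑ ω, F a ω * m i ω = T a := by
      unfold Uag at h1; linarith
    apply le_csSup
    · apply (Set.finite_range (fun a => (∑ ω, F a ω * r ω) - T a)).bddAbove.mono
      rintro x ⟨a, -, rfl⟩
      exact ⟨a, rfl⟩
    · refine ⟨a, fun a' => ?_, ?_⟩
      · have := key a'
        rwa [Uag, h3] at this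
      · rw [prinAct_eq, h3]
  · apply csSup_le
    · obtain ⟨a, ha⟩ := Finite.exists_max (fun a => T a - c a)
      exact ⟨_, a, ha, rfl⟩
    rintro x ⟨a, ha, rfl⟩
    obtain ⟨j, hj⟩ := hT' a
    have hu : Uag F (m j) c a = T a - c a := by rw [Uag, hj]
    have hall : ∀ i a', Uag F (m i) c a' ≤ Uag F (m j) c a := by
      intro i a'
      have h1 := hT a' i
      have h2 := ha a'
      rw [hu]; unfold Uag; linarith
    have h1 : (∑ ω, F a ω * r ω) - T a ≤ Uprin F r (m j) c := by
      apply le_csSup (best_bdd F r (m j) c)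
      exact ⟨a, hall j, by rw [prinAct_eq, hj]⟩
    refine h1.trans (le_csSup ?_ ⟨j, fun i => (ciSup_le (hall i)).trans (uag_le_best F _ c a), rfl⟩)
    apply (Set.finite_range (fun i => Uprin F r (m i) c)).bddAbove.mono
    rintro x ⟨i, -, rfl⟩
    exact ⟨i, rfl⟩

/-- The infimum of the regret over menus of deterministic contracts of
size exactly `n = |A|` equals the infimum over menus of all finite sizes `K ≥ 1`. -/
theorem menu_size_n_suffices
    {A Ω : Type} [Fintype A] [Fintype Ω] [Nonempty A] [Nonempty Ω]
    (F : A → Ω → ℝ) (r : Ω → ℝ) (C : Set (A → ℝ))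
    (hInst : IsPAInstance F r C) :
    sInf { x | ∃ m : Fin (Fintype.card A) → Ω → ℝ,
        (∀ i, IsContract (m i)) ∧ x = regretMenu F r C m }
      = sInf { x | ∃ K : ℕ, 0 < K ∧ ∃ m : Fin K → Ω → ℝ,
          (∀ i, IsContract (m i)) ∧ x = regretMenu F r C m } := by
  congr 1
  ext x
  constructor
  · rintro ⟨m, hm, rfl⟩
    exact ⟨_, Fintype.card_pos, m, hm, rfl⟩
  · rintro ⟨K, hK, m, hm, rfl⟩
    have : Nonempty (Fin K) := ⟨⟨0, hK⟩⟩
    have hmax : ∀ a, ∃ i, ∀ j, ∑ ω, F a ω * m j ω ≤ ∑ ω, F a ω * m i ω := fun a =>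
      Finite.exists_max (fun i => ∑ ω, F a ω * m i ω)
    choose g hg using hmax
    let e := Fintype.equivFin A
    refine ⟨fun k => m (g (e.symm k)), fun k => hm _, ?_⟩
    have h : ∀ c, UprinMenu F r m c = UprinMenu F r (fun k => m (g (e.symm k))) c := by
      intro c
      rw [menu_eq F r hK m c (fun a => ∑ ω, F a ω * m (g a) ω) hg (fun a => ⟨g a, rfl⟩),
        menu_eq F r Fintype.card_pos (fun k => m (g (e.symm k))) c
          (fun a => ∑ ω, F a ω * m (g a) ω) (fun a k => hg a _) (fun a => ⟨e a, by simp⟩)]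
    simp only [regretMenu, h]
end

section
/- For every δ ∈ [0,1/2], in the hard instance I_δ: (i) the randomized contract γ placing probability 1/2 on each of the deterministic contracts p^1 = (0,0) and p^2 = (√(δ/2), 0) (payments listed as (p_{ω1}, p_{ω2})) satisfies R(γ) = √(δ/8); and (ii) every menu of deterministic contracts Π of any finite size satisfies R(Π) ≥ √(δ/4). -/
open Finset

variable {A Ω : Type} [Fintype A] [Fintype Ω] [Nonempty A] [Nonempty Ω]

/-- A randomized contract: a finitely supported probability distribution over
deterministic contracts, represented as a finite tuple of contracts with probabilities. -/
structure RandCon (Ω : Type) where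
  n : ℕ
  ps : Fin n → Ω → ℝ
  q : Fin n → ℝ
  q_nonneg : ∀ i, 0 ≤ q i
  q_sum : ∑ i, q i = 1

/-- All the contracts in the support are genuine (nonnegative) contracts. -/
def RandCon.valid {Ω : Type} (γ : RandCon Ω) : Prop := ∀ i ω, 0 ≤ γ.ps i ω

/-- Agent's expected utility `U^a(γ,c)` of a randomized contract. -/
noncomputable def UagRand (F : A → Ω → ℝ) (γ : RandCon Ω) (c : A → ℝ) : ℝ :=
  ∑ i, γ.q i * (⨆ a : A, Uag F (γ.ps i) c a)

/-- Principal's expected utility `U^p(γ,c)` of a randomized contract. -/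
noncomputable def UprinRand (F : A → Ω → ℝ) (r : Ω → ℝ) (γ : RandCon Ω) (c : A → ℝ) : ℝ :=
  ∑ i, γ.q i * Uprin F r (γ.ps i) c

/-- The regret `R(γ)` of a randomized contract. -/
noncomputable def regretRand (F : A → Ω → ℝ) (r : Ω → ℝ) (C : Set (A → ℝ))
    (γ : RandCon Ω) : ℝ :=
  sSup { x | ∃ c ∈ C, x = OPT F r c - UprinRand F r γ c }

/-- Principal's expected utility `U^p(Γ,c)` under a menu of randomized contracts:
the agent selects an element maximizing its own expected utility, breaking ties in
favor of the principal. -/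
noncomputable def UprinRMenu (F : A → Ω → ℝ) (r : Ω → ℝ) {K : ℕ} (Γ : Fin K → RandCon Ω)
    (c : A → ℝ) : ℝ :=
  sSup { x | ∃ i : Fin K, (∀ j : Fin K, UagRand F (Γ j) c ≤ UagRand F (Γ i) c) ∧
    x = UprinRand F r (Γ i) c }

/-- The regret `R(Γ)` of a menu of randomized contracts. -/
noncomputable def regretRMenu (F : A → Ω → ℝ) (r : Ω → ℝ) (C : Set (A → ℝ)) {K : ℕ}
    (Γ : Fin K → RandCon Ω) : ℝ :=
  sSup { x | ∃ c ∈ C, x = OPT F r c - UprinRMenu F r Γ c }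

/-- The randomized contract placing probability `1/2` on each of two given
deterministic contracts. -/
noncomputable def uniform2 {Ω : Type} (p1 p2 : Ω → ℝ) : RandCon Ω where
  n := 2
  ps := ![p1, p2]
  q := fun _ => 1/2
  q_nonneg := fun _ => by norm_num
  q_sum := by norm_num [Fin.sum_univ_two]

set_option maxHeartbeats 2000000

theorem Uprin_attained (F : A → Ω → ℝ) (r p : Ω → ℝ) (c : A → ℝ) :
    ∃ a : A, (∀ a' : A, Uag F p c a' ≤ Uag F p c a) ∧ Uprin F r p c = prinAct F r p a := by
  have hfin : { x | ∃ a : A, (∀ a' : A, Uag F p c a' ≤ Uag F p c a) ∧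
      x = prinAct F r p a }.Finite := by
    apply (Set.finite_range (fun a : A => prinAct F r p a)).subset
    rintro x ⟨a, _, rfl⟩
    exact ⟨a, rfl⟩
  obtain ⟨a, ha⟩ := Finite.exists_max (fun a : A => Uag F p c a)
  have hne : Set.Nonempty { x | ∃ a : A, (∀ a' : A, Uag F p c a' ≤ Uag F p c a) ∧
      x = prinAct F r p a } := ⟨_, a, ha, rfl⟩
  exact Set.Nonempty.csSup_mem hne hfin

theorem Uprin_eq_of (F : A → Ω → ℝ) (r p : Ω → ℝ) (c : A → ℝ) (a : A)
    (ha : ∀ a' : A, Uag F p c a' ≤ Uag F p c a)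
    (h : ∀ b, (∀ a' : A, Uag F p c a' ≤ Uag F p c b) → prinAct F r p b ≤ prinAct F r p a) :
    Uprin F r p c = prinAct F r p a := by
  apply IsGreatest.csSup_eq
  refine ⟨⟨a, ha, rfl⟩, ?_⟩
  rintro x ⟨b, hb, rfl⟩
  exact h b hb

theorem UprinMenu_attained (F : A → Ω → ℝ) (r : Ω → ℝ) {K : ℕ} (m : Fin (K+1) → Ω → ℝ)
    (c : A → ℝ) :
    ∃ i, (∀ j, agentBest F (m j) c ≤ agentBest F (m i) c) ∧
      UprinMenu F r m c = Uprin F r (m i) c := by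
  have hfin : { x | ∃ i, (∀ j, agentBest F (m j) c ≤ agentBest F (m i) c) ∧
      x = Uprin F r (m i) c }.Finite := by
    apply (Set.finite_range (fun i => Uprin F r (m i) c)).subset
    rintro x ⟨a, _, rfl⟩
    exact ⟨a, rfl⟩
  obtain ⟨a, ha⟩ := Finite.exists_max (fun i => agentBest F (m i) c)
  have hne : Set.Nonempty { x | ∃ i, (∀ j, agentBest F (m j) c ≤ agentBest F (m i) c) ∧
      x = Uprin F r (m i) c } := ⟨_, a, ha, rfl⟩
  exact Set.Nonempty.csSup_mem hne hfin

theorem agentBest_eq_of (F : A → Ω → ℝ) (p : Ω → ℝ) (c : A → ℝ) (a : A)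
    (ha : ∀ a' : A, Uag F p c a' ≤ Uag F p c a) : agentBest F p c = Uag F p c a := by
  apply le_antisymm
  · exact ciSup_le ha
  · exact le_ciSup (f := fun a => Uag F p c a) (Set.finite_range _).bddAbove a

/-- In the hard instance `I_δ` (for `δ ∈ [0,1/2]`):
(i) the randomized contract placing probability `1/2` on each of `p¹ = (0,0)` and
`p² = (√(δ/2), 0)` has regret exactly `√(δ/8)`; and
(ii) every menu of deterministic contracts of any finite size has regret at least
`√(δ/4)`. -/
theorem hard_instance_randomization_helps
    (δ : ℝ) (hδ : δ ∈ Set.Icc (0:ℝ) (1/2))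
    (F : Fin 2 → Fin 2 → ℝ)
    (hF : F = fun a ω =>
      if a = 0 then (if ω = 0 then (1:ℝ) else 0)
      else (if ω = 0 then 1 - Real.sqrt (2*δ) else Real.sqrt (2*δ)))
    (r : Fin 2 → ℝ) (hr : r = fun ω => if ω = 0 then (1:ℝ) else 0)
    (C : Set (Fin 2 → ℝ))
    (hC : C = {(fun _ => (0:ℝ)), (fun a => if a = 0 then δ else 0)})
    (p1 p2 : Fin 2 → ℝ)
    (hp1 : p1 = fun _ => (0:ℝ))
    (hp2 : p2 = fun ω => if ω = 0 then Real.sqrt (δ/2) else 0) :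
    regretRand F r C (uniform2 p1 p2) = Real.sqrt (δ/8) ∧
      ∀ (K : ℕ) (m : Fin (K+1) → Fin 2 → ℝ), (∀ i, IsContract (m i)) →
        regretMenu F r C m ≥ Real.sqrt (δ/4) := by
  obtain ⟨h0, h1⟩ := hδ
  obtain ⟨s, hs⟩ : ∃ s, s = Real.sqrt (2*δ) := ⟨_, rfl⟩
  have hs0 : 0 ≤ s := hs ▸ Real.sqrt_nonneg _
  have hsq : s^2 = 2*δ := by rw [hs]; exact Real.sq_sqrt (by linarith)
  have hs1 : s ≤ 1 := by nlinarith
  have e2 : Real.sqrt (δ/2) = s/2 := by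
    rw [show δ/2 = (s/2)^2 by nlinarith]; exact Real.sqrt_sq (by linarith)
  have e8 : Real.sqrt (δ/8) = s/4 := by
    rw [show δ/8 = (s/4)^2 by nlinarith]; exact Real.sqrt_sq (by linarith)
  have e4 : Real.sqrt (δ/4) ≤ s/2 := by
    apply Real.sqrt_le_iff.2; constructor <;> nlinarith
  have hδs : δ = s^2/2 := by linarith
  rw [e8]
  rw [← hs] at hF
  rw [e2] at hp2
  clear hs e2 e8
  have U0 : ∀ p c, Uag F p c 0 = p 0 - c 0 := by
    intro p c; simp [Uag, hF, Fin.sum_univ_two]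
  have U1 : ∀ p c, Uag F p c 1 = (1-s) * p 0 + s * p 1 - c 1 := by
    intro p c; simp [Uag, hF, Fin.sum_univ_two]
  have P0 : ∀ p, prinAct F r p 0 = 1 - p 0 := by
    intro p; simp [prinAct, hF, hr, Fin.sum_univ_two]
  have P1 : ∀ p, prinAct F r p 1 = (1-s) * (1 - p 0) - s * p 1 := by
    intro p; simp [prinAct, hF, hr, Fin.sum_univ_two]; ring
  obtain ⟨c0, hc0⟩ : ∃ c0 : Fin 2 → ℝ, c0 = fun _ => (0:ℝ) := ⟨_, rfl⟩
  obtain ⟨c1, hc1⟩ : ∃ c1 : Fin 2 → ℝ, c1 = fun a => if a = 0 then δ else 0 := ⟨_, rfl⟩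
  rw [← hc0, ← hc1] at hC
  have c00 : c0 0 = 0 := by rw [hc0]
  have c01 : c0 1 = 0 := by rw [hc0]
  have c10 : c1 0 = s^2/2 := by rw [hc1]; simpa using hδs
  have c11 : c1 1 = 0 := by rw [hc1]; simp
  have p10 : p1 0 = 0 := by rw [hp1]
  have p11 : p1 1 = 0 := by rw [hp1]
  have p20 : p2 0 = s/2 := by rw [hp2]; simp
  have p21 : p2 1 = 0 := by rw [hp2]; simp
  have c1p1 : IsContract p1 := by intro ω; rw [hp1]
  have c1p2 : IsContract p2 := by
    intro ω; rw [hp2]; dsimp only; split_ifs <;> linarith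
  have A1 : Uprin F r p1 c0 = 1 := by
    rw [Uprin_eq_of F r p1 c0 0, P0, p10]; · ring
    · simp only [Fin.forall_fin_two, U0, U1, c00, c01, p10, p11]; constructor <;> nlinarith
    · simp only [Fin.forall_fin_two, P0, P1, p10, p11]; constructor <;> intro _ <;> nlinarith
  have A2 : Uprin F r p2 c0 = 1 - s/2 := by
    rw [Uprin_eq_of F r p2 c0 0, P0, p20]
    · simp only [Fin.forall_fin_two, U0, U1, c00, c01, p20, p21]; constructor <;> nlinarith
    · simp only [Fin.forall_fin_two, P0, P1, p20, p21]; constructor <;> intro _ <;> nlinarith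
  have A3 : Uprin F r p1 c1 = 1 - s := by
    rw [Uprin_eq_of F r p1 c1 1, P1, p10, p11]; · ring
    · simp only [Fin.forall_fin_two, U0, U1, c10, c11, p10, p11]; constructor <;> nlinarith
    · simp only [Fin.forall_fin_two, U0, U1, P0, P1, p10, p11, c10, c11]
      constructor
      · rintro ⟨_, h⟩
        have : s = 0 := by nlinarith
        simp [this]
      · intro _; linarith
  have A4 : Uprin F r p2 c1 = 1 - s/2 := by
    rw [Uprin_eq_of F r p2 c1 0, P0, p20]
    · simp only [Fin.forall_fin_two, U0, U1, c10, c11, p20, p21]; constructor <;> nlinarith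
    · simp only [Fin.forall_fin_two, P0, P1, p20, p21]; constructor <;> intro _ <;> nlinarith
  have O0 : OPT F r c0 = 1 := by
    apply IsGreatest.csSup_eq
    refine ⟨⟨p1, c1p1, A1.symm⟩, ?_⟩
    rintro x ⟨p, hp, rfl⟩
    obtain ⟨a, -, ha⟩ := Uprin_attained F r p c0
    rw [ha]
    have := hp 0
    have := hp 1
    revert a
    simp only [Fin.forall_fin_two, P0, P1]
    constructor <;> intro _ <;> nlinarith
  have key : ∀ p, IsContract p → ∀ a, (∀ a', Uag F p c1 a' ≤ Uag F p c1 a) →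
      prinAct F r p a ≤ 1 - s ∨ (a = 0 ∧ (s = 0 ∨ s / 2 ≤ p 0)) := by
    intro p hp a hbr
    have q0 := hp 0
    have q1 := hp 1
    rcases (by omega : a = 0 ∨ a = 1) with rfl | rfl
    · right
      refine ⟨rfl, ?_⟩
      have h := hbr 1
      rw [U0, U1, c10, c11] at h
      rcases hs0.eq_or_lt with h' | h'
      · left; exact h'.symm
      · right
        have : s * (s/2) ≤ s * p 0 := by nlinarith
        exact le_of_mul_le_mul_left this h'
    · left; rw [P1]; nlinarith
  have O1 : OPT F r c1 = 1 - s/2 := by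
    apply IsGreatest.csSup_eq
    refine ⟨⟨p2, c1p2, A4.symm⟩, ?_⟩
    rintro x ⟨p, hp, rfl⟩
    obtain ⟨a, hbr, ha⟩ := Uprin_attained F r p c1
    rw [ha]
    rcases key p hp a hbr with h | ⟨rfl, h | h⟩
    · linarith
    · rw [P0]; linarith [hp 0]
    · rw [P0]; linarith
  constructor
  · have R0 : OPT F r c0 - UprinRand F r (uniform2 p1 p2) c0 = s/4 := by
      have : UprinRand F r (uniform2 p1 p2) c0 =
          1/2 * Uprin F r p1 c0 + 1/2 * Uprin F r p2 c0 := Fin.sum_univ_two _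
      rw [this, A1, A2, O0]; ring
    have R1 : OPT F r c1 - UprinRand F r (uniform2 p1 p2) c1 = s/4 := by
      have : UprinRand F r (uniform2 p1 p2) c1 =
          1/2 * Uprin F r p1 c1 + 1/2 * Uprin F r p2 c1 := Fin.sum_univ_two _
      rw [this, A3, A4, O1]; ring
    apply IsGreatest.csSup_eq
    refine ⟨⟨c0, by simp [hC], R0.symm⟩, ?_⟩
    rintro x ⟨c, hc, rfl⟩
    rw [hC] at hc
    rcases hc with rfl | rfl
    · exact R0.le
    · exact R1.le
  · intro K m hm
    have hCf : C.Finite := by rw [hC]; exact Set.toFinite _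
    have hbdd : BddAbove { x | ∃ c ∈ C, x = OPT F r c - UprinMenu F r m c } := by
      apply Set.Finite.bddAbove
      apply (hCf.image (fun c => OPT F r c - UprinMenu F r m c)).subset
      rintro x ⟨c, hc, rfl⟩
      exact ⟨c, hc, rfl⟩
    have L : ∀ c ∈ C, OPT F r c - UprinMenu F r m c ≤ regretMenu F r C m :=
      fun c hc => le_csSup hbdd ⟨c, hc, rfl⟩
    have L0 := L c0 (by simp [hC])
    have L1 := L c1 (by simp [hC])
    rw [O0] at L0
    rw [O1] at L1
    obtain ⟨i, -, hi⟩ := UprinMenu_attained F r m c1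
    obtain ⟨a, hbr, ha⟩ := Uprin_attained F r (m i) c1
    rw [hi, ha] at L1
    obtain ⟨j, hj, hj'⟩ := UprinMenu_attained F r m c0
    obtain ⟨b, hbr', hb⟩ := Uprin_attained F r (m j) c0
    rw [hj', hb] at L0
    have hle := hj i
    rw [agentBest_eq_of F (m j) c0 b hbr'] at hle
    have h3 : m i 0 ≤ agentBest F (m i) c0 := by
      have := le_ciSup (f := fun a => Uag F (m i) c0 a) (Set.finite_range _).bddAbove 0
      simp only [U0, c00, sub_zero] at this
      exact this
    have h4 : prinAct F r (m j) b + Uag F (m j) c0 b ≤ 1 := by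
      rcases (by omega : b = 0 ∨ b = 1) with rfl | rfl
      · rw [P0, U0, c00]; linarith
      · rw [P1, U1, c01]; nlinarith
    rcases key (m i) (hm i) a hbr with h | ⟨-, h | h⟩
    · linarith
    · linarith [hm i 0]
    · linarith
end
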